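/- Let Ω = S^{ℤᵈ} with S a finite set, and let P and Q be Borel probability measures on Ω. Suppose there is a summable function ρ : ℤᵈ → ℝ₊ such that |E_P[g] − E_Q[g]| ≤ Σ_x ρ(x) δ_x g for every local function g, where δ_x g := sup_σ |g(σˣ) − g(σ)| is the oscillation at site x. Let φ : ℤᵈ → ℝ₊ satisfy Σ_x ρ(x) φ(x) < ∞. Then there exists a coupling μ̂ of P and Q (a probability measure on Ω × Ω with marginals P and Q) such that Σ_x φ(x) μ̂{(X₁, X₂) : X₁(x) ≠ X₂(x)} ≤ Σ_x φ(x) ρ(x) < ∞. -/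

import Mathlib

open MeasureTheory Real

/-- A function on `S^{ℤᵈ}` is local if it depends on finitely many coordinates. -/
def IsLocalFn {S : Type*} {d : ℕ} (g : ((Fin d → ℤ) → S) → ℝ) : Prop :=
  ∃ Λ : Finset (Fin d → ℤ), ∀ σ τ, (∀ x ∈ Λ, σ x = τ x) → g σ = g τ

/-- Oscillation of `g` at the site `x`: `δ_x g = sup |g(σ) - g(τ)|` over configurations
agreeing off `x`. -/
noncomputable def oscSite {S : Type*} {d : ℕ} (x : Fin d → ℤ)
    (g : ((Fin d → ℤ) → S) → ℝ) : ℝ :=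
  sSup {v | ∃ σ τ : (Fin d → ℤ) → S, (∀ y, y ≠ x → σ y = τ y) ∧ v = |g σ - g τ|}

section Abstract

variable {X : Type*} [TopologicalSpace X] [CompactSpace X] [T2Space X] [MeasurableSpace X]
  [BorelSpace X]

/-- `v` is an admissible dual upper bound for `h`. -/
def KRAdm {I : Type*} (P Q : Measure X) (C : I → C(X × X, ℝ)) (K : ℝ)
    (h : C(X × X, ℝ)) (v : ℝ) : Prop :=
  ∃ (f g : C(X, ℝ)) (i : I) (t : ℝ), 0 ≤ t ∧
    (∀ x y, h (x, y) ≤ f x + g y + t * C i (x, y)) ∧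
    v = (∫ x, f x ∂P) + (∫ x, g x ∂Q) + t * K

lemma kr_integrable (P : Measure X) [IsFiniteMeasure P] (f : C(X, ℝ)) :
    Integrable (fun x => f x) P := by
  have := (BoundedContinuousFunction.mkOfCompact f).integrable P
  exact this

theorem kr_abstract [Nonempty X] [SecondCountableTopology X] {I : Type*} [Nonempty I]
    (P Q : Measure X) [IsProbabilityMeasure P] [IsProbabilityMeasure Q]
    (C : I → C(X × X, ℝ))
    (hdir : ∀ i j, ∃ k, (∀ p, C i p ≤ C k p) ∧ (∀ p, C j p ≤ C k p))
    (K : ℝ)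
    (key : ∀ (f g : C(X, ℝ)) (i : I) (t : ℝ), 0 ≤ t →
      (∀ x y, 0 ≤ f x + g y + t * C i (x, y)) →
      0 ≤ (∫ x, f x ∂P) + (∫ x, g x ∂Q) + t * K) :
    ∃ μ : Measure (X × X), IsProbabilityMeasure μ ∧ μ.map Prod.fst = P ∧ μ.map Prod.snd = Q ∧
      ∀ i, ∫ p, C i p ∂μ ≤ K := by
  let i0 : I := Classical.arbitrary I
  have adm_smul : ∀ (c : ℝ), 0 < c → ∀ h v, KRAdm P Q C K h v → KRAdm P Q C K (c • h) (c * v) := by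
    rintro c hc h v ⟨f, g, i, t, ht, hle, rfl⟩
    refine ⟨c • f, c • g, i, c * t, by positivity, fun x y => ?_, ?_⟩
    · have := mul_le_mul_of_nonneg_left (hle x y) hc.le
      simp only [ContinuousMap.smul_apply, smul_eq_mul]
      linarith
    · simp only [ContinuousMap.smul_apply, smul_eq_mul, integral_const_mul]
      ring
  have adm_add : ∀ h v h' v', KRAdm P Q C K h v → KRAdm P Q C K h' v' →
      KRAdm P Q C K (h + h') (v + v') := by
    rintro h v h' v' ⟨f, g, i, t, ht, hle, rfl⟩ ⟨f', g', i', t', ht', hle', rfl⟩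
    obtain ⟨k, hk, hk'⟩ := hdir i i'
    refine ⟨f + f', g + g', k, t + t', by positivity, fun x y => ?_, ?_⟩
    · have h1 := mul_le_mul_of_nonneg_left (hk (x, y)) ht
      have h2 := mul_le_mul_of_nonneg_left (hk' (x, y)) ht'
      have h3 := hle x y
      have h4 := hle' x y
      simp only [ContinuousMap.add_apply]
      linarith
    · simp only [ContinuousMap.add_apply]
      rw [integral_add (kr_integrable P f) (kr_integrable P f'),
        integral_add (kr_integrable Q g) (kr_integrable Q g')]
      ring
  have adm_lb : ∀ h v, KRAdm P Q C K h v → -‖h‖ ≤ v := by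
    rintro h v ⟨f, g, i, t, ht, hle, rfl⟩
    have := key (f + ContinuousMap.const X ‖h‖) g i t ht (fun x y => by
      have h1 := hle x y
      have h2 := (abs_le.1 (h.norm_coe_le_norm (x, y))).1
      simp only [ContinuousMap.add_apply, ContinuousMap.const_apply]
      linarith)
    simp only [ContinuousMap.add_apply, ContinuousMap.const_apply] at this
    rw [integral_add (kr_integrable P f) (integrable_const _)] at this
    simp at this
    linarith
  have adm_ex : ∀ h, ∃ v, KRAdm P Q C K h v := fun h =>
    ⟨_, ContinuousMap.const X ‖h‖, 0, i0, 0, le_rfl, fun x y => by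
      have h2 := (abs_le.1 (h.norm_coe_le_norm (x, y))).2
      simpa using h2, rfl⟩
  let N : C(X × X, ℝ) → ℝ := fun h => sInf {v | KRAdm P Q C K h v}
  have hbdd : ∀ h, BddBelow {v | KRAdm P Q C K h v} := fun h => ⟨-‖h‖, fun v hv => adm_lb h v hv⟩
  have N_le : ∀ h v, KRAdm P Q C K h v → N h ≤ v := fun h v hv => csInf_le (hbdd h) hv
  have le_N : ∀ h b, (∀ v, KRAdm P Q C K h v → b ≤ v) → b ≤ N h := fun h b hb =>
    le_csInf (adm_ex h) hb
  have N_hom1 : ∀ c : ℝ, 0 < c → ∀ x, N (c • x) ≤ c * N x := by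
    intro c hc x
    have : c⁻¹ * N (c • x) ≤ N x := by
      apply le_N
      intro v hv
      rw [inv_mul_le_iff₀ hc]
      exact N_le _ _ (adm_smul c hc x v hv)
    rwa [inv_mul_le_iff₀ hc] at this
  have N_hom : ∀ c : ℝ, 0 < c → ∀ x, N (c • x) = c * N x := by
    intro c hc x
    refine le_antisymm (N_hom1 c hc x) ?_
    have := N_hom1 c⁻¹ (inv_pos.2 hc) (c • x)
    rw [smul_smul, inv_mul_cancel₀ hc.ne', one_smul] at this
    rwa [le_inv_mul_iff₀ hc] at this
  have N_add : ∀ x y, N (x + y) ≤ N x + N y := by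
    intro x y
    have : N (x + y) - N y ≤ N x := by
      apply le_N
      intro v hv
      have : N (x + y) - v ≤ N y := by
        apply le_N
        intro w hw
        have := N_le _ _ (adm_add x v y w hv hw)
        linarith
      linarith
    linarith
  have N_zero : 0 ≤ N 0 := le_N _ _ fun v hv => by simpa using adm_lb 0 v hv
  obtain ⟨L, -, hL⟩ := exists_extension_of_le_sublinear (⊥ : C(X × X, ℝ) →ₗ.[ℝ] ℝ) N N_hom N_add (by
    rintro ⟨x, hx⟩
    have hx0 : x = 0 := (Submodule.mem_bot ℝ).1 hx
    subst hx0
    have : (⊥ : C(X × X, ℝ) →ₗ.[ℝ] ℝ) ⟨0, hx⟩ = 0 := LinearPMap.map_zero _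
    rw [this]; exact N_zero)
  have Lpos : ∀ h : C(X × X, ℝ), (∀ p, 0 ≤ h p) → 0 ≤ L h := by
    intro h hh
    have h1 : L (-h) ≤ 0 := (hL _).trans (N_le _ _ ⟨0, 0, i0, 0, le_rfl, fun x y => by
      simpa using hh (x, y), by simp⟩)
    rw [map_neg] at h1
    linarith
  have Lcost : ∀ i, L (C i) ≤ K := fun i =>
    (hL _).trans (N_le _ _ ⟨0, 0, i, 1, zero_le_one, fun x y => by simp, by simp⟩)
  have Lfst1 : ∀ f : C(X, ℝ), L (f.comp ContinuousMap.fst) ≤ ∫ x, f x ∂P := fun f =>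
    (hL _).trans (N_le _ _ ⟨f, 0, i0, 0, le_rfl, fun x y => by simp, by simp⟩)
  have Lsnd1 : ∀ f : C(X, ℝ), L (f.comp ContinuousMap.snd) ≤ ∫ x, f x ∂Q := fun f =>
    (hL _).trans (N_le _ _ ⟨0, f, i0, 0, le_rfl, fun x y => by simp, by simp⟩)
  have Lfst : ∀ f : C(X, ℝ), L (f.comp ContinuousMap.fst) = ∫ x, f x ∂P := fun f => by
    refine le_antisymm (Lfst1 f) ?_
    have := Lfst1 (-f)
    rw [show (-f).comp (ContinuousMap.fst : C(X × X, X)) = -(f.comp ContinuousMap.fst) from rfl,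
      map_neg] at this
    simp only [ContinuousMap.neg_apply, integral_neg] at this
    linarith
  have Lsnd : ∀ f : C(X, ℝ), L (f.comp ContinuousMap.snd) = ∫ x, f x ∂Q := fun f => by
    refine le_antisymm (Lsnd1 f) ?_
    have := Lsnd1 (-f)
    rw [show (-f).comp (ContinuousMap.snd : C(X × X, X)) = -(f.comp ContinuousMap.snd) from rfl,
      map_neg] at this
    simp only [ContinuousMap.neg_apply, integral_neg] at this
    linarith
  let Λ0 : CompactlySupportedContinuousMap (X × X) ℝ →ₗ[ℝ] ℝ :=
    { toFun := fun f => L (f : C(X × X, ℝ))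
      map_add' := fun f g => L.map_add (f : C(X × X, ℝ)) (g : C(X × X, ℝ))
      map_smul' := fun c f => L.map_smul c (f : C(X × X, ℝ)) }
  let Λ : CompactlySupportedContinuousMap (X × X) ℝ →ₚ[ℝ] ℝ :=
    PositiveLinearMap.mk₀ Λ0 (fun f hf => Lpos _ (fun p => hf p))
  let μ := RealRMK.rieszMeasure Λ
  have hμ : ∀ h : C(X × X, ℝ), ∫ p, h p ∂μ = L h := fun h =>
    RealRMK.integral_rieszMeasure Λ (CompactlySupportedContinuousMap.continuousMapEquiv h)
  have : IsFiniteMeasure μ := inferInstanceAs (IsFiniteMeasure (RealRMK.rieszMeasure Λ))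
  have hfst : μ.map Prod.fst = P := by
    apply ext_of_forall_integral_eq_of_IsFiniteMeasure
    intro f
    rw [integral_map measurable_fst.aemeasurable f.continuous.aestronglyMeasurable]
    exact (hμ (f.toContinuousMap.comp ContinuousMap.fst)).trans (Lfst f.toContinuousMap)
  have hsnd : μ.map Prod.snd = Q := by
    apply ext_of_forall_integral_eq_of_IsFiniteMeasure
    intro f
    rw [integral_map measurable_snd.aemeasurable f.continuous.aestronglyMeasurable]
    exact (hμ (f.toContinuousMap.comp ContinuousMap.snd)).trans (Lsnd f.toContinuousMap)
  refine ⟨μ, ⟨?_⟩, hfst, hsnd, fun i => (hμ (C i)).trans_le (Lcost i)⟩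
  have : P Set.univ = 1 := measure_univ
  rwa [← hfst, Measure.map_apply measurable_fst MeasurableSet.univ] at this

end Abstract

section Spin

variable {S : Type*} {d : ℕ}

open Classical in
/-- The finite-volume Hamming cost. -/
noncomputable def hamCost (φ : (Fin d → ℤ) → ℝ) (F : Finset (Fin d → ℤ))
    (σ τ : (Fin d → ℤ) → S) : ℝ := ∑ x ∈ F, φ x * (if σ x = τ x then 0 else 1)

lemma hamCost_tri (φ : (Fin d → ℤ) → ℝ) (hφ : ∀ x, 0 ≤ φ x) (F : Finset (Fin d → ℤ))
    (σ τ η : (Fin d → ℤ) → S) : hamCost φ F σ η ≤ hamCost φ F σ τ + hamCost φ F τ η := by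
  unfold hamCost
  rw [← Finset.sum_add_distrib]
  refine Finset.sum_le_sum fun x _ => ?_
  rw [← mul_add]
  refine mul_le_mul_of_nonneg_left ?_ (hφ x)
  split_ifs <;> simp_all

lemma hamCost_nonneg (φ : (Fin d → ℤ) → ℝ) (hφ : ∀ x, 0 ≤ φ x) (F : Finset (Fin d → ℤ))
    (σ τ : (Fin d → ℤ) → S) : 0 ≤ hamCost φ F σ τ :=
  Finset.sum_nonneg fun x _ => mul_nonneg (hφ x) (by split_ifs <;> simp)

lemma hamCost_eq_zero (φ : (Fin d → ℤ) → ℝ) (F : Finset (Fin d → ℤ))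
    (σ τ : (Fin d → ℤ) → S) (h : ∀ x ∈ F, σ x = τ x) : hamCost φ F σ τ = 0 :=
  Finset.sum_eq_zero fun x hx => by simp [h x hx]

lemma hamCost_le_single (φ : (Fin d → ℤ) → ℝ) (hφ : ∀ x, 0 ≤ φ x) (F : Finset (Fin d → ℤ))
    (σ τ : (Fin d → ℤ) → S) (x : Fin d → ℤ) (h : ∀ y, y ≠ x → σ y = τ y) :
    hamCost φ F σ τ ≤ φ x := by
  unfold hamCost
  by_cases hx : x ∈ F
  · rw [Finset.sum_eq_single_of_mem x hx (fun y _ hy => by simp [h y hy])]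
    have := hφ x
    split_ifs <;> simp [this]
  · rw [Finset.sum_eq_zero]
    · exact hφ x
    · intro y hy
      have : y ≠ x := fun e => hx (e ▸ hy)
      simp [h y this]

lemma continuous_site_eq [TopologicalSpace S] [DiscreteTopology S] (x : Fin d → ℤ) :
    IsClopen {p : ((Fin d → ℤ) → S) × ((Fin d → ℤ) → S) | p.1 x = p.2 x} := by
  have hc : Continuous (fun p : ((Fin d → ℤ) → S) × ((Fin d → ℤ) → S) => (p.1 x, p.2 x)) := by
    fun_prop
  exact (isClopen_discrete {q : S × S | q.1 = q.2}).preimage hc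

open Classical in
lemma hamCost_continuous [TopologicalSpace S] [DiscreteTopology S] (φ : (Fin d → ℤ) → ℝ)
    (F : Finset (Fin d → ℤ)) :
    Continuous (fun p : ((Fin d → ℤ) → S) × ((Fin d → ℤ) → S) => hamCost φ F p.1 p.2) := by
  unfold hamCost
  refine continuous_finsetSum _ fun x _ => continuous_const.mul ?_
  have hc : Continuous (fun p : ((Fin d → ℤ) → S) × ((Fin d → ℤ) → S) => (p.1 x, p.2 x)) := by
    fun_prop
  exact (continuous_of_discreteTopology (f := fun q : S × S => if q.1 = q.2 then (0:ℝ) else 1)).comp hc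

theorem spin_key [Fintype S] [Nonempty S] [MeasurableSpace S] [TopologicalSpace S]
    [DiscreteTopology S] [BorelSpace S]
    (P Q : Measure ((Fin d → ℤ) → S)) [IsProbabilityMeasure P] [IsProbabilityMeasure Q]
    (ρ : (Fin d → ℤ) → ℝ) (hρnn : ∀ x, 0 ≤ ρ x)
    (hdual : ∀ g : ((Fin d → ℤ) → S) → ℝ, IsLocalFn g → Measurable g →
      |(∫ σ, g σ ∂P) - ∫ σ, g σ ∂Q| ≤ ∑' x, ρ x * oscSite x g)
    (φ : (Fin d → ℤ) → ℝ) (hφnn : ∀ x, 0 ≤ φ x)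
    (hφρ : Summable fun x => φ x * ρ x)
    (f g : C((Fin d → ℤ) → S, ℝ)) (F : Finset (Fin d → ℤ)) (t : ℝ) (ht : 0 ≤ t)
    (hfg : ∀ σ τ, 0 ≤ f σ + g τ + t * hamCost φ F σ τ) :
    0 ≤ (∫ σ, f σ ∂P) + (∫ σ, g σ ∂Q) + t * ∑' x, φ x * ρ x := by
  let h : ((Fin d → ℤ) → S) → ℝ := fun σ => ⨅ τ, (g τ + t * hamCost φ F σ τ)
  have hb : ∀ σ, BddBelow (Set.range fun τ => g τ + t * hamCost φ F σ τ) := by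
    intro σ
    refine ⟨-f σ, ?_⟩
    rintro _ ⟨τ, rfl⟩
    have := hfg σ τ
    simp only
    linarith
  have h_le : ∀ σ τ, h σ ≤ g τ + t * hamCost φ F σ τ := fun σ τ => ciInf_le (hb σ) τ
  have h_le_g : ∀ σ, h σ ≤ g σ := fun σ => by
    simpa [hamCost_eq_zero φ F σ σ (fun _ _ => rfl)] using h_le σ σ
  have f_le_h : ∀ σ, - f σ ≤ h σ := fun σ => le_ciInf fun τ => by
    have := hfg σ τ
    linarith
  have h_lip : ∀ σ τ, h σ - h τ ≤ t * hamCost φ F σ τ := by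
    intro σ τ
    have : h σ - t * hamCost φ F σ τ ≤ h τ := le_ciInf fun η => by
      have h1 := h_le σ η
      have h2 := mul_le_mul_of_nonneg_left (hamCost_tri φ hφnn F σ τ η) ht
      linarith
    linarith
  have h_loc : ∀ σ τ, (∀ x ∈ F, σ x = τ x) → h σ = h τ := by
    intro σ τ hst
    have h1 := h_lip σ τ
    have h2 := h_lip τ σ
    rw [hamCost_eq_zero φ F _ _ hst] at h1
    rw [hamCost_eq_zero φ F _ _ (fun x hx => (hst x hx).symm)] at h2
    linarith
  -- continuity
  have h_cont : Continuous h := by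
    let e : (F → S) → ((Fin d → ℤ) → S) := fun a x =>
      open Classical in if hx : x ∈ F then a ⟨x, hx⟩ else Classical.arbitrary S
    have : h = (fun a => h (e a)) ∘ (fun σ (x : F) => σ x.1) := by
      funext σ
      exact h_loc _ _ fun x hx => by simp [e, hx]
    rw [this]
    exact (continuous_of_discreteTopology).comp (by fun_prop)
  have hd := hdual h ⟨F, h_loc⟩ h_cont.measurable
  have hosc0 : ∀ x, 0 ≤ oscSite x h := fun x => Real.sSup_nonneg (by
    rintro _ ⟨σ, τ, -, rfl⟩; exact abs_nonneg _)
  have hosc : ∀ x, oscSite x h ≤ t * φ x := fun x => Real.sSup_le (by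
    rintro _ ⟨σ, τ, hst, rfl⟩
    have h1 := h_lip σ τ
    have h2 := h_lip τ σ
    have h3 := mul_le_mul_of_nonneg_left (hamCost_le_single φ hφnn F σ τ x hst) ht
    have h4 := mul_le_mul_of_nonneg_left
      (hamCost_le_single φ hφnn F τ σ x (fun y hy => (hst y hy).symm)) ht
    rw [abs_le]
    constructor <;> linarith) (mul_nonneg ht (hφnn x))
  have hterm : ∀ x, ρ x * oscSite x h ≤ t * (φ x * ρ x) := fun x => by
    have := mul_le_mul_of_nonneg_left (hosc x) (hρnn x)
    linarith
  have hsum : ∑' x, ρ x * oscSite x h ≤ t * ∑' x, φ x * ρ x := by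
    rw [← tsum_mul_left]
    exact Summable.tsum_le_tsum hterm (Summable.of_nonneg_of_le
      (fun x => mul_nonneg (hρnn x) (hosc0 x)) hterm (hφρ.mul_left t)) (hφρ.mul_left t)
  have hi1 := kr_integrable P ⟨h, h_cont⟩
  have hi2 := kr_integrable Q ⟨h, h_cont⟩
  have e1 : ∫ σ, h σ ∂Q ≤ ∫ σ, g σ ∂Q := integral_mono hi2 (kr_integrable Q g) h_le_g
  have e2 : ∫ σ, - f σ ∂P ≤ ∫ σ, h σ ∂P := integral_mono (kr_integrable P f).neg hi1 f_le_h
  rw [integral_neg] at e2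
  have e3 := (abs_le.1 (hd.trans hsum)).2
  linarith

end Spin

/-- Existence of a coupling via Kantorovich–Rubinstein duality: if
`|E_P g - E_Q g| ≤ ∑ₓ ρ(x) δ_x g` for every local function `g`, and `∑ₓ ρ(x) φ(x) < ∞`, then
there is a coupling `μ̂` of `P` and `Q` with
`∑ₓ φ(x) μ̂{X₁(x) ≠ X₂(x)} ≤ ∑ₓ φ(x) ρ(x)`. -/
theorem coupling_from_oscillation_bound
    {S : Type*} [Fintype S] [Nonempty S] [MeasurableSpace S] [MeasurableSingletonClass S]
    (d : ℕ)
    (P Q : Measure ((Fin d → ℤ) → S)) [IsProbabilityMeasure P] [IsProbabilityMeasure Q]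
    (ρ : (Fin d → ℤ) → ℝ) (hρnn : ∀ x, 0 ≤ ρ x) (hρsum : Summable ρ)
    (hdual : ∀ g : ((Fin d → ℤ) → S) → ℝ, IsLocalFn g → Measurable g →
      |(∫ σ, g σ ∂P) - ∫ σ, g σ ∂Q| ≤ ∑' x, ρ x * oscSite x g)
    (φ : (Fin d → ℤ) → ℝ) (hφnn : ∀ x, 0 ≤ φ x)
    (hφρ : Summable fun x => φ x * ρ x) :
    ∃ μhat : Measure (((Fin d → ℤ) → S) × ((Fin d → ℤ) → S)),
      IsProbabilityMeasure μhat
      ∧ μhat.map Prod.fst = P ∧ μhat.map Prod.snd = Q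
      ∧ Summable (fun x => φ x * (μhat {p | p.1 x ≠ p.2 x}).toReal)
      ∧ ∑' x, φ x * (μhat {p | p.1 x ≠ p.2 x}).toReal ≤ ∑' x, φ x * ρ x := by
  classical
  letI : TopologicalSpace S := ⊥
  haveI : DiscreteTopology S := ⟨rfl⟩
  haveI : BorelSpace S := ⟨by
    rw [borel_eq_top_of_discrete]
    exact MeasurableSpace.ext fun s => ⟨fun _ => trivial, fun _ => s.toFinite.measurableSet⟩⟩
  obtain ⟨μ, hμ, h1, h2, h3⟩ := kr_abstract P Q
    (fun F : Finset (Fin d → ℤ) =>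
      (⟨fun p => hamCost φ F p.1 p.2, hamCost_continuous φ F⟩ :
        C(((Fin d → ℤ) → S) × ((Fin d → ℤ) → S), ℝ)))
    (fun F G => ⟨F ∪ G,
      fun p => Finset.sum_le_sum_of_subset_of_nonneg Finset.subset_union_left
        fun x _ _ => mul_nonneg (hφnn x) (by split_ifs <;> simp),
      fun p => Finset.sum_le_sum_of_subset_of_nonneg Finset.subset_union_right
        fun x _ _ => mul_nonneg (hφnn x) (by split_ifs <;> simp)⟩)
    (∑' x, φ x * ρ x)
    (fun f g F t ht hfg => spin_key P Q ρ hρnn hdual φ hφnn hφρ f g F t ht hfg)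
  have hint : ∀ x, ∫ p : ((Fin d → ℤ) → S) × ((Fin d → ℤ) → S),
      (if p.1 x = p.2 x then (0:ℝ) else 1) ∂μ = (μ {p | p.1 x ≠ p.2 x}).toReal := by
    intro x
    have hm : MeasurableSet {p : ((Fin d → ℤ) → S) × ((Fin d → ℤ) → S) | p.1 x ≠ p.2 x} :=
      (continuous_site_eq x).compl.isOpen.measurableSet
    have := integral_indicator_one (μ := μ) hm
    rw [measureReal_def] at this
    rw [← this]
    congr 1
    funext p
    by_cases hp : p.1 x = p.2 x <;> simp [hp]
  have hintg : ∀ x, Integrable (fun p : ((Fin d → ℤ) → S) × ((Fin d → ℤ) → S) =>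
      φ x * (if p.1 x = p.2 x then (0:ℝ) else 1)) μ := by
    intro x
    have := kr_integrable μ (⟨fun p => hamCost φ {x} p.1 p.2, hamCost_continuous φ {x}⟩ :
        C(((Fin d → ℤ) → S) × ((Fin d → ℤ) → S), ℝ))
    simpa [hamCost] using this
  have hF : ∀ F : Finset (Fin d → ℤ),
      ∑ x ∈ F, φ x * (μ {p | p.1 x ≠ p.2 x}).toReal ≤ ∑' x, φ x * ρ x := by
    intro F
    refine le_trans (le_of_eq ?_) (h3 F)
    simp only [ContinuousMap.coe_mk, hamCost]
    rw [integral_finsetSum _ (fun x _ => by convert hintg x)]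
    refine Finset.sum_congr rfl fun x _ => ?_
    rw [integral_const_mul, ← hint x]
  have hnn : ∀ x, 0 ≤ φ x * (μ {p | p.1 x ≠ p.2 x}).toReal := fun x =>
    mul_nonneg (hφnn x) ENNReal.toReal_nonneg
  have hs := summable_of_sum_le hnn hF
  exact ⟨μ, hμ, h1, h2, hs, hs.tsum_le_of_sum_le hF⟩
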